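/- arXiv:2205.08388 — 2 statements merged into one kernel-verified Lean document; each statement's English description precedes it below -/
import Mathlib

section
/- Let X be a Hausdorff topological space equipped with its Borel σ-algebra, let T > 0, let 𝒳 = C([0,T];X) be the space of continuous maps from [0,T] into X with the compact-open topology and its Borel σ-algebra, let Π₀ : 𝒳 → X denote evaluation at time 0, and let X₀ be a Borel subset of X. Let 𝒰 ⊆ 𝒳 satisfy: (H1′) Π₀(𝒰) ⊇ X₀; (H2′) there exists a family 𝒦′(X₀) of compact subsets of X₀ such that every inner regular Borel probability measure μ₀ on X with μ₀(X₀) = 1 satisfies μ₀(A) = sup{ μ₀(K) : K ∈ 𝒦′(X₀), K ⊆ A } for every Borel set A ⊆ X; (H3′) for every K ∈ 𝒦′(X₀) the set Π₀⁻¹(K) ∩ 𝒰 is compact in 𝒳. Then for every inner regular Borel probability measure μ₀ on X with μ₀(X₀) = 1 there exists a 𝒰-trajectory statistical solution ρ on 𝒳 whose pushforward under Π₀ equals μ₀. -/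
open MeasureTheory Set

/-- A Borel (probability) measure is inner regular: the measure of every
measurable set is the supremum of the measures of its compact subsets. -/
def InnerRegularMeasure {Z : Type*} [TopologicalSpace Z] [MeasurableSpace Z]
    (μ : Measure Z) : Prop :=
  ∀ A : Set Z, MeasurableSet A → μ A = ⨆ (K : Set Z) (_ : IsCompact K) (_ : K ⊆ A), μ K

/-- A `𝒰`-trajectory statistical solution: an inner regular Borel probability
measure carried by a Borel subset of `𝒰`. -/
def IsTrajectoryStatSol {𝒳 : Type*} [TopologicalSpace 𝒳] [MeasurableSpace 𝒳]
    (𝒰 : Set 𝒳) (ρ : Measure 𝒳) : Prop :=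
  IsProbabilityMeasure ρ ∧ InnerRegularMeasure ρ ∧
    ∃ 𝒱 : Set 𝒳, 𝒱 ⊆ 𝒰 ∧ MeasurableSet 𝒱 ∧ ρ 𝒱 = 1

open Topology in
theorem lift_compact {Y K : Type*} [TopologicalSpace Y] [T2Space Y] [CompactSpace Y]
    [MeasurableSpace Y] [BorelSpace Y] [TopologicalSpace K] [T2Space K] [CompactSpace K]
    [MeasurableSpace K] [BorelSpace K] (g : C(Y, K)) (hg : Function.Surjective g)
    (μ : Measure K) [IsFiniteMeasure μ] [μ.Regular] :
    ∃ ν : Measure Y, IsFiniteMeasure ν ∧ ν.InnerRegular ∧ ν.map g = μ := by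
  have hint : ∀ h : C(K, ℝ), Integrable (fun x => h x) μ := fun h =>
    h.continuous.integrable_of_hasCompactSupport (HasCompactSupport.of_compactSpace _)
  let L : C(K, ℝ) →ₗ[ℝ] ℝ :=
    { toFun := fun h => ∫ x, h x ∂μ
      map_add' := fun a b => by
        simpa using integral_add (hint a) (hint b)
      map_smul' := fun c a => by
        simpa using integral_const_mul c (fun x => a x) }
  let P : C(K, ℝ) →ₗ[ℝ] C(Y, ℝ) :=
    { toFun := fun h => h.comp g
      map_add' := fun a b => rfl
      map_smul' := fun c a => rfl }
  have hP : Function.Injective P := by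
    intro a b hab
    ext x
    obtain ⟨y, rfl⟩ := hg x
    exact congrArg (fun h : C(Y, ℝ) => h y) hab
  let e := LinearEquiv.ofInjective P hP
  let F : C(Y, ℝ) →ₗ.[ℝ] ℝ :=
    { domain := LinearMap.range P
      toFun := L.comp e.symm.toLinearMap }
  have hF : ∀ h : C(K, ℝ), ∀ (hh : P h ∈ F.domain), F ⟨P h, hh⟩ = ∫ x, h x ∂μ := by
    intro h hh
    have : e.symm ⟨P h, hh⟩ = h := by
      rw [LinearEquiv.symm_apply_eq]; rfl
    change L (e.symm ⟨P h, hh⟩) = _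
    rw [this]; rfl
  let s : PointedCone ℝ C(Y, ℝ) :=
    { carrier := {h | ∀ y, 0 ≤ h y}
      zero_mem' := fun y => le_rfl
      add_mem' := fun {a b} ha hb y => add_nonneg (ha y) (hb y)
      smul_mem' := fun c a ha y => mul_nonneg c.2 (ha y) }
  obtain ⟨G, hG, hGs⟩ := riesz_extension s F (by
      rintro ⟨_, h, rfl⟩ hx
      refine le_of_le_of_eq ?_ (hF h ⟨h, rfl⟩).symm
      refine integral_nonneg fun x => ?_
      obtain ⟨y, rfl⟩ := hg x
      exact hx y) (by
      intro y
      refine ⟨⟨P (ContinuousMap.const K ‖y‖), ⟨_, rfl⟩⟩, fun t => ?_⟩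
      have h1 := y.norm_coe_le_norm t
      have h2 := neg_abs_le (y t)
      rw [Real.norm_eq_abs] at h1
      change 0 ≤ ‖y‖ + y t
      linarith)
  let Q : CompactlySupportedContinuousMap Y ℝ →ₗ[ℝ] ℝ :=
    { toFun := fun h => G h.toContinuousMap
      map_add' := fun a b => G.map_add a.toContinuousMap b.toContinuousMap
      map_smul' := fun c a => G.map_smul c a.toContinuousMap }
  let Λ : CompactlySupportedContinuousMap Y ℝ →ₚ[ℝ] ℝ :=
    PositiveLinearMap.mk₀ Q (fun h hh => hGs _ (fun y => hh y))
  have : (RealRMK.rieszMeasure Λ).InnerRegular := inferInstance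
  refine ⟨RealRMK.rieszMeasure Λ, inferInstance, this, ?_⟩
  have h1 : ((RealRMK.rieszMeasure Λ).map g).InnerRegular :=
    Measure.InnerRegular.map_of_continuous g.continuous
  refine Measure.ext_of_integral_eq_on_compactlySupported fun f => ?_
  have h0 := integral_map (μ := RealRMK.rieszMeasure Λ) g.continuous.aemeasurable
    (f := fun x => f x) (f.continuous.aestronglyMeasurable)
  refine h0.trans ?_
  have h2 := RealRMK.integral_rieszMeasure Λ
    ⟨f.toContinuousMap.comp g, HasCompactSupport.of_compactSpace _⟩
  refine h2.trans ?_
  have h3 := hG ⟨P f.toContinuousMap, ⟨_, rfl⟩⟩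
  exact h3.trans (hF _ _)

theorem lift_set {Y X : Type*} [TopologicalSpace Y] [T2Space Y]
    [MeasurableSpace Y] [BorelSpace Y] [TopologicalSpace X] [T2Space X]
    [MeasurableSpace X] [BorelSpace X] (f : Y → X) (hf : Continuous f)
    (C : Set Y) (K : Set X) (hC : IsCompact C) (hK : IsCompact K) (hm : MapsTo f C K)
    (hs : SurjOn f C K) (μ : Measure X) [IsFiniteMeasure μ] [μ.InnerRegular] (hμ : μ Kᶜ = 0) :
    ∃ ν : Measure Y, ν.InnerRegular ∧ ν Cᶜ = 0 ∧ ν.map f = μ := by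
  have := isCompact_iff_compactSpace.1 hC
  have := isCompact_iff_compactSpace.1 hK
  have hKe : MeasurableEmbedding (Subtype.val : K → X) :=
    MeasurableEmbedding.subtype_coe hK.measurableSet
  have i1 : (μ.comap (Subtype.val : K → X)).InnerRegular :=
    ⟨Measure.InnerRegularWRT.comap Measure.InnerRegular.innerRegular hKe
      (fun U hU => hKe.measurableSet_image' hU)
      (fun L _ hLc => hK.isClosed.isClosedEmbedding_subtypeVal.isCompact_preimage hLc)⟩
  let g : C(C, K) := ⟨hm.restrict f C K, hf.restrict hm⟩
  obtain ⟨ν, h1, h2, h3⟩ := lift_compact g (by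
      rintro ⟨x, hx⟩
      obtain ⟨y, hy, rfl⟩ := hs hx
      exact ⟨⟨y, hy⟩, rfl⟩)
    (μ.comap (Subtype.val : K → X))
  refine ⟨ν.map Subtype.val, Measure.InnerRegular.map_of_continuous continuous_subtype_val, ?_, ?_⟩
  · rw [Measure.map_apply measurable_subtype_coe hC.measurableSet.compl]
    simp
  · rw [Measure.map_map hf.measurable measurable_subtype_coe]
    have : f ∘ (Subtype.val : C → Y) = (Subtype.val : K → X) ∘ g := rfl
    rw [this, ← Measure.map_map measurable_subtype_coe g.continuous.measurable, h3,
      map_comap_subtype_coe hK.measurableSet]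
    exact Measure.restrict_eq_self_of_ae_mem hμ

theorem innerRegular_of {Z : Type*} [TopologicalSpace Z] [MeasurableSpace Z]
    (μ : Measure Z) (h : InnerRegularMeasure μ) : μ.InnerRegular := by
  refine ⟨fun A hA r hr => ?_⟩
  rw [h A hA] at hr
  simp only [lt_iSup_iff] at hr
  obtain ⟨K, hK, hKA, h⟩ := hr
  exact ⟨K, hKA, hK, h⟩

theorem existence_of_trajectory_statistical_solutions_restricted
    {X : Type*} [TopologicalSpace X] [T2Space X] [MeasurableSpace X] [BorelSpace X]
    (T : ℝ) (hT : 0 < T)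
    [MeasurableSpace C(Icc (0 : ℝ) T, X)] [BorelSpace C(Icc (0 : ℝ) T, X)]
    (𝒰 : Set C(Icc (0 : ℝ) T, X))
    (Pi0 : C(Icc (0 : ℝ) T, X) → X)
    (hPi0 : ∀ u : C(Icc (0 : ℝ) T, X), Pi0 u = u ⟨0, Set.left_mem_Icc.mpr hT.le⟩)
    (X₀ : Set X) (hX₀ : MeasurableSet X₀)
    -- (H1')
    (H1' : X₀ ⊆ Pi0 '' 𝒰)
    (𝒦' : Set (Set X))
    (h𝒦'_compact : ∀ K ∈ 𝒦', IsCompact K ∧ K ⊆ X₀)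
    -- (H2')
    (H2' : ∀ μ₀ : Measure X, IsProbabilityMeasure μ₀ → InnerRegularMeasure μ₀ →
      μ₀ X₀ = 1 → ∀ A : Set X, MeasurableSet A →
        μ₀ A = ⨆ (K : Set X) (_ : K ∈ 𝒦') (_ : K ⊆ A), μ₀ K)
    -- (H3')
    (H3' : ∀ K ∈ 𝒦', IsCompact (Pi0 ⁻¹' K ∩ 𝒰)) :
    ∀ μ₀ : Measure X, IsProbabilityMeasure μ₀ → InnerRegularMeasure μ₀ → μ₀ X₀ = 1 →
      ∃ ρ : Measure C(Icc (0 : ℝ) T, X),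
        IsTrajectoryStatSol 𝒰 ρ ∧ μ₀ = Measure.map Pi0 ρ := by
  intro μ₀ hp hreg h1
  have hPc : Continuous Pi0 := by
    have : Pi0 = fun u => u ⟨0, Set.left_mem_Icc.mpr hT.le⟩ := funext hPi0
    rw [this]
    fun_prop
  have i0 := innerRegular_of μ₀ hreg
  have hex : ∀ n : ℕ, ∃ K ∈ 𝒦', 1 - ((n : ENNReal) + 1)⁻¹ < μ₀ K := by
    intro n
    have h := H2' μ₀ hp hreg h1 univ MeasurableSet.univ
    rw [measure_univ] at h
    have h2 : 1 - ((n : ENNReal) + 1)⁻¹ < 1 :=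
      ENNReal.sub_lt_self ENNReal.one_ne_top one_ne_zero
        (ENNReal.inv_ne_zero.2 (by finiteness))
    replace h2 := h2.trans_eq h
    simp only [lt_iSup_iff] at h2
    obtain ⟨K, hK, _, h⟩ := h2
    exact ⟨K, hK, h⟩
  choose K hK hμK using hex
  have hKm : ∀ n, MeasurableSet (K n) := fun n => (h𝒦'_compact _ (hK n)).1.measurableSet
  have hU : μ₀ (⋃ n, K n) = 1 := by
    refine le_antisymm prob_le_one ?_
    have ht : Filter.Tendsto (fun n : ℕ => 1 - ((n : ENNReal) + 1)⁻¹) Filter.atTop (nhds 1) := by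
      have h := (ENNReal.tendsto_inv_nat_nhds_zero).comp (Filter.tendsto_add_atTop_nat 1)
      have h' := ENNReal.Tendsto.sub (tendsto_const_nhds (x := (1 : ENNReal))) h
        (Or.inl ENNReal.one_ne_top)
      simpa [Function.comp_def] using h'
    exact le_of_tendsto' ht fun n => (hμK n).le.trans (measure_mono (subset_iUnion K n))
  have hDm : ∀ n, MeasurableSet (disjointed K n) := fun n => MeasurableSet.disjointed hKm n
  have hsum : Measure.sum (fun n => μ₀.restrict (disjointed K n)) = μ₀ := by
    rw [← Measure.restrict_iUnion (disjoint_disjointed K) hDm, iUnion_disjointed]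
    refine Measure.restrict_eq_self_of_ae_mem ?_
    exact (prob_compl_eq_zero_iff (MeasurableSet.iUnion hKm)).2 hU
  have hlift : ∀ n, ∃ ν : Measure C(Icc (0 : ℝ) T, X), ν.InnerRegular ∧
      ν (Pi0 ⁻¹' K n ∩ 𝒰)ᶜ = 0 ∧ ν.map Pi0 = μ₀.restrict (disjointed K n) := by
    intro n
    refine lift_set Pi0 hPc _ (K n) (H3' _ (hK n)) (h𝒦'_compact _ (hK n)).1
      (fun u hu => hu.1) ?_ _ ?_
    · intro x hx
      obtain ⟨u, hu, rfl⟩ := H1' ((h𝒦'_compact _ (hK n)).2 hx)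
      exact ⟨u, ⟨hx, hu⟩, rfl⟩
    · rw [Measure.restrict_apply (hKm n).compl]
      convert measure_empty (μ := μ₀)
      rw [← disjoint_iff_inter_eq_empty]
      exact (disjoint_compl_left).mono_right (disjointed_subset K n)
  choose ν hν1 hν2 hν3 using hlift
  have hmap : Measure.map Pi0 (Measure.sum ν) = μ₀ := by
    rw [Measure.map_sum hPc.aemeasurable]
    simp_rw [hν3]
    exact hsum
  have hprob : IsProbabilityMeasure (Measure.sum ν) := by
    constructor
    have : μ₀ univ = 1 := measure_univ
    rwa [← hmap, Measure.map_apply hPc.measurable MeasurableSet.univ, preimage_univ] at this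
  have hVm : MeasurableSet (⋃ n, Pi0 ⁻¹' K n ∩ 𝒰) :=
    MeasurableSet.iUnion fun n => (H3' _ (hK n)).measurableSet
  refine ⟨Measure.sum ν, ⟨hprob, ?_, ⋃ n, Pi0 ⁻¹' K n ∩ 𝒰,
    iUnion_subset fun n => inter_subset_right, hVm, ?_⟩, hmap.symm⟩
  · intro A hA
    rw [hA.measure_eq_iSup_isCompact]
    refine iSup_congr fun L => ?_
    rw [iSup_comm]
  · rw [← prob_compl_eq_zero_iff hVm, Measure.sum_apply _ hVm.compl, ENNReal.tsum_eq_zero]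
    intro n
    exact measure_mono_null (compl_subset_compl.2 (subset_iUnion
      (fun n => Pi0 ⁻¹' K n ∩ 𝒰) n)) (hν2 n)
end

section
/- Let C₀(ℝ²;ℝ) denote the Banach space of continuous functions ℝ² → ℝ vanishing at infinity, and endow its continuous dual space with the weak-* topology and the associated Borel σ-algebra. Then the set of continuous linear functionals Λ for which there exist f ∈ L¹(ℝ²) and k ∈ ℕ with f = 0 Lebesgue-almost everywhere outside the closed ball of radius k centred at 0, and Λ(g) = ∫_{ℝ²} g f dx for every g ∈ C₀(ℝ²;ℝ), is a Borel subset of the weak-* dual. (This states that the compactly supported integrable functions L¹_c(ℝ²) form a Borel subset of ℳ(ℝ²) with the weak-* topology.) -/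
open MeasureTheory ZeroAtInfty

local notation "E" => EuclideanSpace ℝ (Fin 2)

theorem aux_bd (g : C₀(E, ℝ)) (x : E) : ‖g x‖ ≤ ‖g‖ := by
  have := g.toBCF.norm_coe_le_norm x
  simpa using this

theorem aux_int (f : Lp ℝ 1 (volume : Measure E)) (g : C₀(E, ℝ)) :
    Integrable (fun x => g x * f x) (volume : Measure E) :=
  (L1.integrable_coeFn f).bdd_mul (c := ‖g‖) (map_continuous g).aestronglyMeasurable
    (Filter.Eventually.of_forall (aux_bd g))

noncomputable def auxT : Lp ℝ 1 (volume : Measure E) →L[ℝ] C₀(E, ℝ) →L[ℝ] ℝ :=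
  LinearMap.mkContinuous₂
    (LinearMap.mk₂ ℝ (fun (f : Lp ℝ 1 (volume : Measure E)) (g : C₀(E, ℝ)) => ∫ x, g x * f x)
      (by
        intro f f' g
        rw [← integral_add (aux_int f g) (aux_int f' g)]
        apply integral_congr_ae
        filter_upwards [Lp.coeFn_add f f'] with x hx
        rw [hx, Pi.add_apply, mul_add])
      (by
        intro c f g
        rw [smul_eq_mul, ← integral_const_mul]
        apply integral_congr_ae
        filter_upwards [Lp.coeFn_smul c f] with x hx
        rw [hx, Pi.smul_apply, smul_eq_mul]; ring)
      (by
        intro f g g'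
        rw [← integral_add (aux_int f g) (aux_int f g')]
        congr 1; ext x
        simp [add_mul])
      (by
        intro c f g
        rw [smul_eq_mul, ← integral_const_mul]
        congr 1; ext x
        simp [mul_assoc]))
    1
    (by
      intro f g
      rw [LinearMap.mk₂_apply, one_mul, L1.norm_eq_integral_norm, mul_comm, ← integral_const_mul]
      apply norm_integral_le_of_norm_le ((L1.integrable_coeFn f).norm.const_mul _)
      refine Filter.Eventually.of_forall fun x => ?_
      rw [norm_mul]
      exact mul_le_mul_of_nonneg_right (aux_bd g x) (norm_nonneg _))

theorem auxT_apply (f : Lp ℝ 1 (volume : Measure E)) (g : C₀(E, ℝ)) :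
    auxT f g = ∫ x, g x * f x := rfl

theorem auxT_inj : Function.Injective auxT := by
  rw [injective_iff_map_eq_zero]
  intro f hf
  rw [Lp.eq_zero_iff_ae_eq_zero]
  apply ae_eq_zero_of_integral_contDiff_smul_eq_zero (L1.integrable_coeFn f).locallyIntegrable
  intro g hg hc
  let g' : C₀(E, ℝ) := ⟨⟨g, hg.continuous⟩, hc.is_zero_at_infty⟩
  have : auxT f g' = 0 := by rw [hf]; rfl
  rw [auxT_apply] at this
  exact this

noncomputable def auxW (f : Lp ℝ 1 (volume : Measure E)) : WeakDual ℝ C₀(E, ℝ) :=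
  StrongDual.toWeakDual (auxT f)

theorem auxW_apply (f : Lp ℝ 1 (volume : Measure E)) (g : C₀(E, ℝ)) :
    auxW f g = ∫ x, g x * f x := rfl

theorem auxW_cont : Continuous auxW := by
  apply WeakDual.continuous_of_continuous_eval
  intro g
  exact (auxT.flip g).continuous

theorem auxW_inj : Function.Injective auxW :=
  fun _ _ h => auxT_inj (StrongDual.toWeakDual.injective h)

theorem aux_closed (k : ℕ) : IsClosed {f : Lp ℝ 1 (volume : Measure E) |
    ∀ᵐ x : E, x ∉ Metric.closedBall (0 : E) k → f x = 0} := by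
  have h : {f : Lp ℝ 1 (volume : Measure E) |
      ∀ᵐ x : E, x ∉ Metric.closedBall (0 : E) k → f x = 0} =
      (LpToLpRestrictCLM E ℝ ℝ volume 1 (Metric.closedBall (0 : E) k)ᶜ) ⁻¹' {0} := by
    ext f
    have h1 := LpToLpRestrictCLM_coeFn ℝ (Metric.closedBall (0 : E) k)ᶜ f
    rw [Set.mem_preimage, Set.mem_singleton_iff, Lp.eq_zero_iff_ae_eq_zero, Set.mem_setOf_eq]
    have h2 := ae_restrict_iff' (μ := (volume : Measure E)) (p := fun x => f x = 0)
      (Metric.isClosed_closedBall (x := (0 : E)) (ε := k)).measurableSet.compl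
    refine Iff.trans h2.symm ?_
    exact ⟨fun h => h1.trans h, fun h => h1.symm.trans h⟩
  rw [h]
  exact isClosed_singleton.preimage (ContinuousLinearMap.continuous _)

/-- `L¹_c(ℝ²)`, the compactly supported integrable functions, form a Borel
subset of the weak-* dual of `C₀(ℝ²;ℝ)` (i.e. of the space of finite signed
Borel measures on `ℝ²` with the weak-* topology). -/
theorem L1c_measurable_in_weakStar_dual_of_C0 :
    MeasurableSet[borel (WeakDual ℝ C₀(E, ℝ))]
      {Λ : WeakDual ℝ C₀(E, ℝ) |
        ∃ f : E → ℝ, ∃ k : ℕ, Integrable f (volume : Measure E) ∧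
          (∀ᵐ x : E ∂(volume : Measure E),
            x ∉ Metric.closedBall (0 : E) k → f x = 0) ∧
          ∀ g : C₀(E, ℝ), Λ g = ∫ x : E, g x * f x} := by
  letI : MeasurableSpace (WeakDual ℝ C₀(E, ℝ)) := borel _
  haveI : BorelSpace (WeakDual ℝ C₀(E, ℝ)) := ⟨rfl⟩
  haveI : Fact ((1 : ENNReal) ≠ ⊤) := ⟨ENNReal.one_ne_top⟩
  have key : ∀ k : ℕ, MeasurableSet (auxW '' {f : Lp ℝ 1 (volume : Measure E) |
    ∀ᵐ x : E, x ∉ Metric.closedBall (0 : E) k → f x = 0}) := fun k =>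
    (aux_closed k).measurableSet_image_of_continuousOn_injOn auxW_cont.continuousOn
      auxW_inj.injOn
  convert MeasurableSet.iUnion key using 1
  ext Λ
  simp only [Set.mem_setOf_eq, Set.mem_iUnion, Set.mem_image]
  constructor
  · rintro ⟨f, k, hf, hk, hΛ⟩
    refine ⟨k, hf.toL1 f, ?_, ?_⟩
    · filter_upwards [hf.coeFn_toL1, hk] with x hx hx' h
      rw [hx, hx' h]
    · apply DFunLike.ext
      intro g
      rw [auxW_apply, hΛ]
      apply integral_congr_ae
      filter_upwards [hf.coeFn_toL1] with x hx
      rw [hx]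
  · rintro ⟨k, f, hk, rfl⟩
    exact ⟨f, k, L1.integrable_coeFn f, hk, fun g => auxW_apply f g⟩
end
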